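/- arXiv:2207.07961 — 3 statements merged into one kernel-verified Lean document; each statement's English description precedes it below -/
import Mathlib

section
/- The Gerstenhaber bracket satisfies the graded Jacobi identity: for f ∈ C^{p+1}(A,A), g ∈ C^{q+1}(A,A), h ∈ C^{r+1}(A,A), one has [f,[g,h]_G]_G = [[f,g]_G, h]_G + (−1)^{pq} [g,[f,h]_G]_G. -/
/-- Partial (Gerstenhaber) composition: for `F ∈ C^{p+1}`, `G ∈ C^{q+1}` and `0 ≤ i ≤ p`,
`(F •_i G)(u₀,…,u_{p+q}) = F(u₀,…,u_{i−1}, G(u_i,…,u_{i+q}), u_{i+q+1},…,u_{p+q})`. -/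
def pcomp {A : Type*} [Ring A] (p q : ℕ) (i : Fin (p + 1))
    (F : (Fin (p + 1) → A) → A) (G : (Fin (q + 1) → A) → A) :
    (Fin (p + q + 1) → A) → A :=
  fun u => F (fun m =>
    if (m : ℕ) < (i : ℕ) then u ⟨(m : ℕ), by omega⟩
    else if (m : ℕ) = (i : ℕ) then G (fun l => u ⟨(i : ℕ) + (l : ℕ), by omega⟩)
    else u ⟨(m : ℕ) + q, by omega⟩)

/-- The Gerstenhaber product `F • G = Σ_{i=0}^{p} (−1)^{iq} F •_i G`. -/
def gprod {A : Type*} [Ring A] (p q : ℕ)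
    (F : (Fin (p + 1) → A) → A) (G : (Fin (q + 1) → A) → A) :
    (Fin (p + q + 1) → A) → A :=
  fun u => ∑ i : Fin (p + 1), ((-1 : ℤ) ^ ((i : ℕ) * q)) • pcomp p q i F G u

/-- Reindexing a cochain along an equality of arities. -/
def recast {A : Type*} [Ring A] {n m : ℕ} (h : n = m) (F : (Fin n → A) → A) :
    (Fin m → A) → A :=
  fun u => F (fun j => u (Fin.cast h j))

/-- The Gerstenhaber bracket `[F,G]_G = F • G − (−1)^{pq} G • F`. -/
def gbr {A : Type*} [Ring A] (p q : ℕ)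
    (F : (Fin (p + 1) → A) → A) (G : (Fin (q + 1) → A) → A) :
    (Fin (p + q + 1) → A) → A :=
  fun u => gprod p q F G u
    - ((-1 : ℤ) ^ (p * q)) • recast (by omega) (gprod q p G F) u

namespace GJ

/-- Extend a cochain to sequences indexed by all naturals. -/
def lift {A : Type*} {n : ℕ} (F : (Fin n → A) → A) : (ℕ → A) → A :=
  fun U => F (fun j => U j)

/-- The sequence obtained from `U` by collapsing a block at position `i` into `x`. -/
def ins {A : Type*} (q i : ℕ) (x : A) (U : ℕ → A) : ℕ → A :=
  fun m => if m < i then U m else if m = i then x else U (m + q)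

def pc {A : Type*} (q i : ℕ) (F G : (ℕ → A) → A) : (ℕ → A) → A :=
  fun U => F (ins q i (G (fun l => U (i + l))) U)

def gp {A : Type*} [Ring A] (p q : ℕ) (F G : (ℕ → A) → A) : (ℕ → A) → A :=
  fun U => ∑ i ∈ Finset.range (p + 1), ((-1 : ℤ) ^ (i * q)) • pc q i F G U

def Loc {A : Type*} (q : ℕ) (G : (ℕ → A) → A) : Prop :=
  ∀ U V : ℕ → A, (∀ l, l ≤ q → U l = V l) → G U = G V

def Lin {A : Type*} [Ring A] (p : ℕ) (F : (ℕ → A) → A) : Prop :=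
  ∀ q i, i ≤ p → ∀ U, ∃ φ : A →+ A, ∀ x, F (ins q i x U) = φ x

theorem lift_recast {A : Type*} [Ring A] {n m : ℕ} (h : n = m) (F : (Fin n → A) → A) :
    lift (recast h F) = lift F := by
  subst h; rfl

theorem lift_gprod {A : Type*} [Ring A] (p q : ℕ)
    (F : (Fin (p + 1) → A) → A) (G : (Fin (q + 1) → A) → A) :
    lift (gprod p q F G) = gp p q (lift F) (lift G) := by
  funext U
  simp only [lift, gprod, gp]
  rw [Finset.sum_range]
  rfl

theorem lift_gbr {A : Type*} [Ring A] (p q : ℕ)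
    (F : (Fin (p + 1) → A) → A) (G : (Fin (q + 1) → A) → A) :
    lift (gbr p q F G) = gp p q (lift F) (lift G)
      - ((-1 : ℤ) ^ (p * q)) • gp q p (lift G) (lift F) := by
  rw [← lift_gprod, ← lift_gprod, ← lift_recast (show q + p + 1 = p + q + 1 by omega)]
  rfl

theorem loc_lift {A : Type*} (q : ℕ) (G : (Fin (q + 1) → A) → A) : Loc q (lift G) := by
  intro U V h
  unfold lift
  congr 1
  funext j
  exact h j (by omega)

theorem lin_lift {k A : Type*} [Field k] [Ring A] [Algebra k A] (p : ℕ)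
    (f : MultilinearMap k (fun _ : Fin (p + 1) => A) A) : Lin p (lift ⇑f) := by
  intro q i hi U
  refine ⟨(f.toLinearMap (fun m => ins q i 0 U m) ⟨i, by omega⟩).toAddMonoidHom, fun x => ?_⟩
  simp only [lift, LinearMap.toAddMonoidHom_coe, MultilinearMap.toLinearMap_apply]
  congr 1
  funext m
  by_cases h : m = ⟨i, by omega⟩
  · subst h; simp [ins]
  · rw [Function.update_of_ne h]
    have : (m : ℕ) ≠ i := fun e => h (Fin.ext e)
    simp [ins, this]

theorem gp_sub_left {A : Type*} [Ring A] (p q : ℕ) (c : ℤ) (F F' G : (ℕ → A) → A) :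
    gp p q (F - c • F') G = gp p q F G - c • gp p q F' G := by
  funext U
  simp only [gp, pc, Pi.sub_apply, Pi.smul_apply, smul_sub, Finset.sum_sub_distrib,
    Finset.smul_sum]
  congr 1
  exact Finset.sum_congr rfl fun i _ => smul_comm _ _ _

theorem gp_sub_right {A : Type*} [Ring A] (p q : ℕ) (c : ℤ) (F G G' : (ℕ → A) → A)
    (hF : Lin p F) :
    gp p q F (G - c • G') = gp p q F G - c • gp p q F G' := by
  funext U
  simp only [gp, pc, Pi.sub_apply, Pi.smul_apply, Finset.smul_sum]
  rw [← Finset.sum_sub_distrib]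
  refine Finset.sum_congr rfl fun i hi => ?_
  obtain ⟨φ, hφ⟩ := hF q i (by simpa [Nat.lt_succ_iff] using hi) U
  simp only [hφ, map_sub, map_zsmul, smul_sub]
  rw [smul_comm]

theorem pc_nest {A : Type*} (q r i t : ℕ) (ht : t ≤ q) (F G H : (ℕ → A) → A) :
    pc r (i + t) (pc q i F G) H = pc (q + r) i F (pc r t G H) := by
  funext U
  simp only [pc]
  congr 1
  funext m
  simp only [ins]
  split_ifs <;> try omega
  · rfl
  · congr 1
    funext l
    simp only [ins]
    split_ifs <;> first | omega | rfl | (congr 1; first | omega | (funext x; congr 1; omega))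
  · congr 1; omega

theorem pc_comm {A : Type*} (q r i j : ℕ) (hij : i < j) (F G H : (ℕ → A) → A) (hG : Loc q G) :
    pc r (j + q) (pc q i F G) H = pc q i (pc r j F H) G := by
  funext U
  simp only [pc]
  congr 1
  funext m
  simp only [ins]
  split_ifs <;> first
    | omega
    | rfl
    | (apply hG; intro l hl; rw [if_pos (by omega)])
    | (congr 1; first | omega | (funext x; split_ifs <;> first | omega | (congr 1; omega)))

/-- Half of the associator. -/
def half {A : Type*} [Ring A] (p q r : ℕ) (F G H : (ℕ → A) → A) (U : ℕ → A) : A :=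
  ∑ i ∈ Finset.range (p + 1), ∑ j ∈ Finset.range i,
    ((-1 : ℤ) ^ (i * q + j * r)) • pc r j (pc q i F G) H U

theorem gp_gp_left {A : Type*} [Ring A] (p q r : ℕ) (F G H : (ℕ → A) → A) (U : ℕ → A) :
    gp (p + q) r (gp p q F G) H U = ∑ i ∈ Finset.range (p + 1), ∑ j ∈ Finset.range (p + q + 1),
      ((-1 : ℤ) ^ (i * q + j * r)) • pc r j (pc q i F G) H U := by
  rw [Finset.sum_comm]
  simp only [gp]
  refine Finset.sum_congr rfl fun j _ => ?_
  simp only [pc, gp, Finset.smul_sum]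
  refine Finset.sum_congr rfl fun i _ => ?_
  rw [smul_smul, ← pow_add, add_comm]

theorem gp_gp_right {A : Type*} [Ring A] (p q r : ℕ) (F G H : (ℕ → A) → A) (hF : Lin p F)
    (U : ℕ → A) :
    gp p (q + r) F (gp q r G H) U = ∑ i ∈ Finset.range (p + 1), ∑ t ∈ Finset.range (q + 1),
      ((-1 : ℤ) ^ (i * q + (i + t) * r)) • pc r (i + t) (pc q i F G) H U := by
  simp only [gp]
  refine Finset.sum_congr rfl fun i hi => ?_
  obtain ⟨φ, hφ⟩ := hF (q + r) i (by simpa [Nat.lt_succ_iff] using hi) U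
  have h1 : ∀ t ∈ Finset.range (q + 1),
      ((-1 : ℤ) ^ (i * q + (i + t) * r)) • pc r (i + t) (pc q i F G) H U
      = ((-1 : ℤ) ^ (i * (q + r))) • ((-1 : ℤ) ^ (t * r)) • φ (pc r t G H (fun l => U (i + l))) := by
    intro t ht
    rw [pc_nest q r i t (by simpa [Nat.lt_succ_iff] using ht), smul_smul, ← pow_add, ← hφ]
    congr 2
    ring
  rw [Finset.sum_congr rfl h1]
  simp only [pc] at hφ ⊢
  rw [hφ, gp, map_sum, Finset.smul_sum]
  simp only [map_zsmul, pc]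

theorem sum_split {A : Type*} [AddCommMonoid A] (p q i : ℕ) (hi : i ≤ p) (a : ℕ → A) :
    ∑ j ∈ Finset.range (p + q + 1), a j = ∑ j ∈ Finset.range i, a j
      + ∑ t ∈ Finset.range (q + 1), a (i + t) + ∑ j ∈ Finset.Ico (i + 1) (p + 1), a (j + q) := by
  rw [Finset.sum_Ico_eq_sum_range, show p + q + 1 = i + (q + 1) + (p + 1 - (i + 1)) by omega,
    Finset.sum_range_add, Finset.sum_range_add]
  congr 1
  refine Finset.sum_congr rfl fun x _ => ?_
  congr 1; omega

theorem assoc_eq {A : Type*} [Ring A] (p q r : ℕ) (F G H : (ℕ → A) → A) (hF : Lin p F)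
    (hG : Loc q G) (U : ℕ → A) :
    gp (p + q) r (gp p q F G) H U = gp p (q + r) F (gp q r G H) U
      + (half p q r F G H U + ((-1 : ℤ) ^ (q * r)) • half p r q F H G U) := by
  rw [gp_gp_left, gp_gp_right p q r F G H hF]
  have h2 : ((-1 : ℤ) ^ (q * r)) • half p r q F H G U
      = ∑ i ∈ Finset.range (p + 1), ∑ j ∈ Finset.Ico (i + 1) (p + 1),
        ((-1 : ℤ) ^ (i * q + (j + q) * r)) • pc r (j + q) (pc q i F G) H U := by
    simp only [half, Finset.smul_sum]
    rw [Finset.sum_comm' (s' := fun j => Finset.Ico (j + 1) (p + 1)) (t' := Finset.range (p + 1))]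
    · refine Finset.sum_congr rfl fun i hi => Finset.sum_congr rfl fun j hj => ?_
      rw [pc_comm q r i j (by simp at hj; omega) F G H hG, smul_smul, ← pow_add]
      congr 2
      ring
    · intro x y
      simp only [Finset.mem_range, Finset.mem_Ico]
      omega
  rw [h2, half, ← Finset.sum_add_distrib, ← Finset.sum_add_distrib]
  refine Finset.sum_congr rfl fun i hi => ?_
  rw [sum_split p q i (by simpa [Nat.lt_succ_iff] using hi)]
  abel

theorem prelie {A : Type*} [Ring A] (p q r : ℕ) (F G H : (ℕ → A) → A) (hF : Lin p F)
    (hG : Loc q G) (hH : Loc r H) (U : ℕ → A) :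
    gp (p + q) r (gp p q F G) H U = gp p (q + r) F (gp q r G H) U
      + ((-1 : ℤ) ^ (q * r)) •
        (gp (p + r) q (gp p r F H) G U - gp p (q + r) F (gp r q H G) U) := by
  rw [assoc_eq p q r F G H hF hG, assoc_eq p r q F H G hF hH, add_comm r q, mul_comm r q,
    add_sub_cancel_left, smul_add, smul_smul, ← pow_add, Even.neg_one_pow ⟨q * r, rfl⟩, one_smul]
  abel

end GJ

theorem gerstenhaber_jacobi (k : Type*) [Field k] (A : Type*) [Ring A] [Algebra k A]
    (p q r : ℕ)
    (f : MultilinearMap k (fun _ : Fin (p + 1) => A) A)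
    (g : MultilinearMap k (fun _ : Fin (q + 1) => A) A)
    (h : MultilinearMap k (fun _ : Fin (r + 1) => A) A) :
    (recast (by omega) (gbr p (q + r) ⇑f (gbr q r ⇑g ⇑h)) :
        (Fin (p + q + r + 1) → A) → A)
      = recast (by omega) (gbr (p + q) r (gbr p q ⇑f ⇑g) ⇑h)
        + ((-1 : ℤ) ^ (p * q)) • recast (by omega) (gbr q (p + r) ⇑g (gbr p r ⇑f ⇑h)) := by
  funext u
  obtain ⟨U, rfl⟩ : ∃ U : ℕ → A, u = fun j : Fin (p + q + r + 1) => U (j : ℕ) :=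
    ⟨fun m => if h : m < p + q + r + 1 then u ⟨m, h⟩ else 0, by funext j; simp only [j.isLt, dite_true]⟩
  change GJ.lift (recast _ _) U = GJ.lift (recast _ _) U
    + ((-1 : ℤ) ^ (p * q)) • GJ.lift (recast _ _) U
  simp only [GJ.lift_recast, GJ.lift_gbr]
  have lf := GJ.lin_lift p f
  have lg := GJ.lin_lift q g
  have lh := GJ.lin_lift r h
  have cf := GJ.loc_lift p f
  have cg := GJ.loc_lift q g
  have ch := GJ.loc_lift r h
  generalize GJ.lift (⇑f) = F at *
  generalize GJ.lift (⇑g) = G at *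
  generalize GJ.lift (⇑h) = H at *
  have e1 := GJ.prelie p q r F G H lf cg ch U
  have e2 := GJ.prelie q p r G F H lg cf ch U
  have e3 := GJ.prelie r p q H F G lh cf cg U
  simp only [GJ.gp_sub_left, GJ.gp_sub_right _ _ _ _ _ _ lf, GJ.gp_sub_right _ _ _ _ _ _ lg,
    GJ.gp_sub_right _ _ _ _ _ _ lh, Pi.sub_apply, Pi.smul_apply]
  simp only [mul_add, add_mul, pow_add, add_comm q p, add_comm r p, add_comm r q, mul_comm q p,
    mul_comm r p, mul_comm r q] at *
  rcases neg_one_pow_eq_or ℤ (p * q) with s | s <;>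
  rcases neg_one_pow_eq_or ℤ (p * r) with t | t <;>
  rcases neg_one_pow_eq_or ℤ (q * r) with w | w <;>
  simp only [s, t, w, mul_one, mul_neg, neg_neg, one_smul, neg_smul] at e1 e2 e3 ⊢ <;>
  rw [e1, e2, e3] <;> abel
end

section
/- The associator of the Gerstenhaber product, A(f,g,h) := (f • g) • h − f • (g • h), satisfies the graded symmetry A(f,g,h) = (−1)^{qr} A(f,h,g) for all f ∈ C^{p+1}(A,A), g ∈ C^{q+1}(A,A), h ∈ C^{r+1}(A,A). -/
/-- Insertion of `G` at slot `i` in a sequence indexed by all naturals. -/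
def insN {A : Type*} (i q : ℕ) (G : (Fin (q + 1) → A) → A) (U : ℕ → A) : ℕ → A :=
  fun m => if m < i then U m else if m = i then G (fun l => U (i + (l : ℕ))) else U (m + q)

lemma insN_comm {A : Type*} (a b q r : ℕ) (hab : a < b) (G : (Fin (q + 1) → A) → A)
    (H : (Fin (r + 1) → A) → A) (U : ℕ → A) :
    insN a r H (insN (b + r) q G U) = insN b q G (insN a r H U) := by
  funext m
  rcases lt_trichotomy m a with h1 | h1 | h1
  · simp [insN, h1, show m < b by omega, show m < b + r by omega]
  · subst h1
    simp only [insN, lt_irrefl, if_true, if_false, hab]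
    congr 1
    funext l
    have := l.2
    simp [show m + (l : ℕ) < b + r by omega]
  · rcases lt_trichotomy m b with h2 | h2 | h2
    · simp [insN, h2, show ¬ m < a by omega, show ¬ m = a by omega]
    · subst h2
      simp only [insN, lt_irrefl, if_true, if_false, show ¬ m < a by omega,
        show ¬ m = a by omega]
      congr 1
      funext l
      simp only [show ¬ m + (l : ℕ) < a by omega, show ¬ m + (l : ℕ) = a by omega, if_false]
      congr 1
      omega
    · simp only [insN, show ¬ m < a by omega, show ¬ m = a by omega, show ¬ m < b by omega,
        show ¬ m = b by omega, show ¬ m + r < b + r by omega, show ¬ m + r = b + r by omega,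
        show ¬ m + q < a by omega, show ¬ m + q = a by omega, if_false]
      congr 1
      omega

lemma insN_nest {A : Type*} (i l q r : ℕ) (hl : l ≤ q) (G : (Fin (q + 1) → A) → A)
    (H : (Fin (r + 1) → A) → A) (U : ℕ → A) :
    insN i q G (insN (i + l) r H U)
      = insN i (q + r) (fun v => G (fun m => insN l r H
          (fun n => if h : n < q + r + 1 then v ⟨n, h⟩ else U 0) m)) U := by
  funext m
  rcases lt_trichotomy m i with h1 | h1 | h1
  · simp [insN, h1, show m < i + l by omega]
  · subst h1
    simp only [insN, lt_irrefl, if_true, if_false]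
    congr 1
    funext s
    have hs := s.2
    rcases lt_trichotomy (s : ℕ) l with h2 | h2 | h2
    · simp [h2, show (s : ℕ) < q + r + 1 by omega]
    · rw [if_neg (by omega), if_pos (by omega), if_neg (by omega), if_pos h2]
      congr 1
      funext t
      have ht := t.2
      rw [dif_pos (by omega)]
      simp only [add_assoc]
    · rw [if_neg (by omega), if_neg (by omega), if_neg (by omega), if_neg (by omega),
        dif_pos (by omega)]
      simp only [add_assoc]
  · simp only [insN, show ¬ m < i by omega, show ¬ m = i by omega,
      show ¬ m + q < i + l by omega, show ¬ m + q = i + l by omega, if_false, add_assoc]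

lemma pcomp_eq {A : Type*} [Ring A] (p q : ℕ) (i : Fin (p + 1))
    (F : (Fin (p + 1) → A) → A) (G : (Fin (q + 1) → A) → A) (U : ℕ → A) :
    pcomp p q i F G (fun m => U m) = F (fun m => insN i q G U m) := rfl

lemma gprod_eq {A : Type*} [Ring A] (p q : ℕ)
    (F : (Fin (p + 1) → A) → A) (G : (Fin (q + 1) → A) → A) (U : ℕ → A) :
    gprod p q F G (fun m => U m)
      = ∑ i ∈ Finset.range (p + 1), ((-1 : ℤ) ^ (i * q)) • F (fun m => insN i q G U m) := by
  rw [Finset.sum_range]; rfl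

lemma insN_lin {k A : Type*} [Field k] [Ring A] [Algebra k A] (p n : ℕ)
    (f : MultilinearMap k (fun _ : Fin (p + 1) => A) A) (i : ℕ) (hi : i < p + 1)
    (s : Finset ℕ) (c : ℕ → ℤ) (G : ℕ → (Fin (n + 1) → A) → A) (U : ℕ → A) :
    f (fun m => insN i n (fun v => ∑ l ∈ s, c l • G l v) U m)
      = ∑ l ∈ s, c l • f (fun m => insN i n (G l) U m) := by
  have key : ∀ K : (Fin (n + 1) → A) → A, f (fun m => insN i n K U m)
      = (f.toLinearMap (fun m => insN i n (fun _ => 0) U m) ⟨i, hi⟩).toAddMonoidHom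
          (K (fun l => U (i + (l : ℕ)))) := by
    intro K
    show _ = f (Function.update _ _ _)
    congr 1
    funext m
    by_cases hm : m = ⟨i, hi⟩
    · subst hm; simp [insN]
    · have : (m : ℕ) ≠ i := fun e => hm (Fin.ext e)
      simp [Function.update_of_ne hm, insN, this]
  simp only [key, map_sum, map_zsmul]

lemma range_split (p q i : ℕ) (hi : i < p + 1) {M : Type*} [AddCommMonoid M] (F : ℕ → M) :
    ∑ j ∈ Finset.range (p + q + 1), F j
      = ∑ j ∈ Finset.range i, F j + ∑ l ∈ Finset.range (q + 1), F (i + l)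
        + ∑ b ∈ Finset.range (p + 1), if i < b then F (b + q) else 0 := by
  obtain ⟨d, rfl⟩ : ∃ d, p = i + d := ⟨p - i, by omega⟩
  rw [show i + d + q + 1 = i + (q + 1) + d by ring, Finset.sum_range_add, Finset.sum_range_add,
    show i + d + 1 = (i + 1) + d by ring, Finset.sum_range_add _ (i + 1) d]
  congr 1
  have hz : (∑ x ∈ Finset.range (i + 1), if i < x then F (x + q) else 0) = 0 := by
    refine Finset.sum_eq_zero fun x hx => ?_
    rw [Finset.mem_range] at hx
    rw [if_neg (by omega)]
  rw [hz, zero_add]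
  · refine Finset.sum_congr rfl fun x _ => ?_
    rw [if_pos (by omega)]
    congr 1
    ring

/-- The part of the double product in which `h` sits strictly left of `g`. -/
def dpart {A : Type*} [Ring A] (p q r : ℕ) (f : (Fin (p + 1) → A) → A)
    (g : (Fin (q + 1) → A) → A) (h : (Fin (r + 1) → A) → A) (U : ℕ → A) : A :=
  ∑ i ∈ Finset.range (p + 1), ∑ j ∈ Finset.range i,
    ((-1 : ℤ) ^ (j * r + i * q)) • f (fun m => insN i q g (insN j r h U) m)

lemma assoc_eq {k A : Type*} [Field k] [Ring A] [Algebra k A]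
    (p q r : ℕ)
    (f : MultilinearMap k (fun _ : Fin (p + 1) => A) A)
    (g : (Fin (q + 1) → A) → A) (h : (Fin (r + 1) → A) → A) (U : ℕ → A) :
    gprod (p + q) r (gprod p q f g) h (fun m => U m)
      - gprod p (q + r) f (gprod q r g h) (fun m => U m)
      = dpart p q r f g h U + ((-1 : ℤ) ^ (q * r)) • dpart p r q f h g U := by
  have h1 : gprod (p + q) r (gprod p q f g) h (fun m => U m)
      = ∑ i ∈ Finset.range (p + 1), ∑ j ∈ Finset.range (p + q + 1),
        ((-1 : ℤ) ^ (j * r + i * q)) • f (fun m => insN i q g (insN j r h U) m) := by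
    rw [gprod_eq, Finset.sum_comm]
    refine Finset.sum_congr rfl fun j _ => ?_
    rw [gprod_eq, Finset.smul_sum]
    refine Finset.sum_congr rfl fun i _ => ?_
    rw [smul_smul, pow_add]
  have h2 : gprod p (q + r) f (gprod q r g h) (fun m => U m)
      = ∑ i ∈ Finset.range (p + 1), ∑ l ∈ Finset.range (q + 1),
        ((-1 : ℤ) ^ ((i + l) * r + i * q)) •
          f (fun m => insN i q g (insN (i + l) r h U) m) := by
    have e : gprod q r g h = fun v => ∑ l ∈ Finset.range (q + 1), ((-1 : ℤ) ^ (l * r)) •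
        g (fun m => insN l r h (fun n => if h : n < q + r + 1 then v ⟨n, h⟩ else U 0) m) := by
      funext v
      rw [← gprod_eq]
      congr 1
      funext m
      rw [dif_pos m.2]
    rw [gprod_eq, e]
    refine Finset.sum_congr rfl fun i hi => ?_
    rw [insN_lin p (q + r) f i (Finset.mem_range.1 hi) _ (fun l => (-1 : ℤ) ^ (l * r))
      (fun l v => g (fun m => insN l r h
        (fun n => if h : n < q + r + 1 then v ⟨n, h⟩ else U 0) m)), Finset.smul_sum]
    refine Finset.sum_congr rfl fun l hl => ?_
    rw [insN_nest i l q r (by have := Finset.mem_range.1 hl; omega), smul_smul, ← pow_add]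
    congr 2
    ring
  have h3 : ∑ i ∈ Finset.range (p + 1), ∑ b ∈ Finset.range (p + 1),
      (if i < b then ((-1 : ℤ) ^ ((b + q) * r + i * q)) •
        f (fun m => insN i q g (insN (b + q) r h U) m) else 0)
      = ((-1 : ℤ) ^ (q * r)) • dpart p r q f h g U := by
    rw [Finset.sum_comm, dpart, Finset.smul_sum]
    refine Finset.sum_congr rfl fun b hb => ?_
    rw [← Finset.sum_filter, Finset.smul_sum]
    refine Finset.sum_congr ?_ fun i hi => ?_
    · ext x
      simp only [Finset.mem_filter, Finset.mem_range] at *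
      omega
    · rw [insN_comm i b r q (by simp only [Finset.mem_filter, Finset.mem_range] at hi; omega),
        smul_smul, ← pow_add]
      congr 2
      ring
  rw [h1, h2, ← h3, dpart, ← Finset.sum_sub_distrib, ← Finset.sum_add_distrib]
  refine Finset.sum_congr rfl fun i hi => ?_
  rw [range_split p q i (Finset.mem_range.1 hi)]
  abel

/-- The associator `A(f,g,h) = (f • g) • h − f • (g • h)` of the Gerstenhaber product
satisfies the graded symmetry `A(f,g,h) = (−1)^{qr} A(f,h,g)`. -/
theorem gerstenhaber_associator_symm (k : Type*) [Field k] (A : Type*) [Ring A] [Algebra k A]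
    (p q r : ℕ)
    (f : MultilinearMap k (fun _ : Fin (p + 1) => A) A)
    (g : MultilinearMap k (fun _ : Fin (q + 1) => A) A)
    (h : MultilinearMap k (fun _ : Fin (r + 1) => A) A) :
    (recast (by omega) (gprod (p + q) r (gprod p q ⇑f ⇑g) ⇑h) :
          (Fin (p + q + r + 1) → A) → A)
        - recast (by omega) (gprod p (q + r) ⇑f (gprod q r ⇑g ⇑h))
      = ((-1 : ℤ) ^ (q * r)) •
          (recast (by omega) (gprod (p + r) q (gprod p r ⇑f ⇑h) ⇑g)
            - recast (by omega) (gprod p (r + q) ⇑f (gprod r q ⇑h ⇑g))) := by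
  funext u
  obtain ⟨U, rfl⟩ : ∃ U : ℕ → A, u = fun m : Fin (p + q + r + 1) => U (m : ℕ) :=
    ⟨fun n => if h : n < p + q + r + 1 then u ⟨n, h⟩ else 0, by funext m; beta_reduce; rw [dif_pos m.2]⟩
  have e1 := assoc_eq p q r f g h U
  have e2 := assoc_eq p r q f h g U
  show gprod (p + q) r (gprod p q ⇑f ⇑g) ⇑h (fun m => U m)
      - gprod p (q + r) ⇑f (gprod q r ⇑g ⇑h) (fun m => U m)
    = ((-1 : ℤ) ^ (q * r)) • (gprod (p + r) q (gprod p r ⇑f ⇑h) ⇑g (fun m => U m)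
      - gprod p (r + q) ⇑f (gprod r q ⇑h ⇑g) (fun m => U m))
  rw [e1, e2, smul_add, smul_smul, mul_comm r q, ← pow_add,
    Even.neg_one_pow ⟨q * r, rfl⟩, one_smul, add_comm]
end

section
/- The modified Hochschild differential satisfies the graded Leibniz rule with respect to the Gerstenhaber bracket: for f ∈ C^{p+1}(A,A) and g ∈ C^{q+1}(A,A), d_H [f,g]_G = [d_H f, g]_G + (−1)^p [f, d_H g]_G. -/
/-- The Hochschild differential on set-level cochains. -/
def hochschild {A : Type*} [Ring A] (p : ℕ) (F : (Fin p → A) → A) :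
    (Fin (p + 1) → A) → A :=
  fun u =>
    u 0 * F (fun i => u i.succ)
      + ∑ s ∈ Finset.range p, ((-1 : ℤ) ^ (s + 1)) •
          F (fun i => if (i : ℕ) < s then u i.castSucc
              else if (i : ℕ) = s then u i.castSucc * u i.succ
              else u i.succ)
      + ((-1 : ℤ) ^ (p + 1)) • (F (fun i => u i.castSucc) * u (Fin.last p))

/-- The modified Hochschild differential `d_H F = (−1)^{n+1} δF` for `F ∈ Cⁿ(A,A)`. -/
def dH {A : Type*} [Ring A] (n : ℕ) (F : (Fin n → A) → A) : (Fin (n + 1) → A) → A :=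
  ((-1 : ℤ) ^ (n + 1)) • hochschild n F

namespace GLeib

set_option linter.unusedSectionVars false

variable {A : Type*} [Ring A]

/-- Partial composition of cochains viewed as functions of infinite sequences. -/
def circ (q i : ℕ) (F G : (ℕ → A) → A) : (ℕ → A) → A :=
  fun u => F (fun m => if m < i then u m else if m = i then G (fun l => u (i + l)) else u (m + q))

/-- `F` depends only on the first `q + 1` entries. -/
def Loc (q : ℕ) (F : (ℕ → A) → A) : Prop :=
  ∀ u v : ℕ → A, (∀ l, l ≤ q → u l = v l) → F u = F v

/-- `F` is additive in the first `p + 1` entries. -/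
def Addi (p : ℕ) (F : (ℕ → A) → A) : Prop :=
  ∀ (u : ℕ → A) (i : ℕ) (x y : A), i ≤ p → F (Function.update u i (x + y)) =
    F (Function.update u i x) + F (Function.update u i y)

/-- The product. -/
def prd (p q : ℕ) (F G : (ℕ → A) → A) : (ℕ → A) → A :=
  ∑ i ∈ Finset.range (p + 1), ((-1 : ℤ) ^ (i * q)) • circ q i F G

/-- The bracket. -/
def brk (p q : ℕ) (F G : (ℕ → A) → A) : (ℕ → A) → A :=
  prd p q F G - ((-1 : ℤ) ^ (p * q)) • prd q p G F

theorem circ_eq_update (q i : ℕ) (F G : (ℕ → A) → A) (u : ℕ → A) :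
    circ q i F G u = F (Function.update (fun m => if m < i then u m else u (m + q)) i
      (G (fun l => u (i + l)))) := by
  unfold circ
  congr 1
  funext m
  by_cases h : m = i
  · subst h; simp
  · simp [h]

/-- `circ` as additive map in the right argument. -/
def circR (p q i : ℕ) (hi : i ≤ p) (F : (ℕ → A) → A) (hF : Addi p F) :
    ((ℕ → A) → A) →+ ((ℕ → A) → A) :=
  AddMonoidHom.mk' (circ q i F) (by
    intro G H
    funext u
    simp only [Pi.add_apply, circ_eq_update]
    exact hF _ _ _ _ hi)

/-- `circ` as additive map in the left argument. -/
def circL (q i : ℕ) (G : (ℕ → A) → A) : ((ℕ → A) → A) →+ ((ℕ → A) → A) :=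
  AddMonoidHom.mk' (fun F => circ q i F G) (by intro F H; rfl)

theorem circ_add_left (q i : ℕ) (F F' G : (ℕ → A) → A) :
    circ q i (F + F') G = circ q i F G + circ q i F' G := rfl

theorem circ_zsmul_left (q i : ℕ) (n : ℤ) (F G : (ℕ → A) → A) :
    circ q i (n • F) G = n • circ q i F G := rfl

theorem circ_sum_left (q i : ℕ) (s : Finset ℕ) (F : ℕ → (ℕ → A) → A) (G : (ℕ → A) → A) :
    circ q i (∑ j ∈ s, F j) G = ∑ j ∈ s, circ q i (F j) G :=
  map_sum (circL q i G) F s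

theorem circ_add_right (p q i : ℕ) (hi : i ≤ p) (F G H : (ℕ → A) → A) (hF : Addi p F) :
    circ q i F (G + H) = circ q i F G + circ q i F H :=
  map_add (circR p q i hi F hF) G H

theorem circ_zsmul_right (p q i : ℕ) (hi : i ≤ p) (n : ℤ) (F G : (ℕ → A) → A) (hF : Addi p F) :
    circ q i F (n • G) = n • circ q i F G :=
  map_zsmul (circR p q i hi F hF) n G

theorem circ_sum_right (p q i : ℕ) (hi : i ≤ p) (s : Finset ℕ) (F : (ℕ → A) → A)
    (G : ℕ → (ℕ → A) → A) (hF : Addi p F) :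
    circ q i F (∑ j ∈ s, G j) = ∑ j ∈ s, circ q i F (G j) :=
  map_sum (circR p q i hi F hF) G s

theorem prd_add_left (p q : ℕ) (F F' G : (ℕ → A) → A) :
    prd p q (F + F') G = prd p q F G + prd p q F' G := by
  simp only [prd, circ_add_left, smul_add, Finset.sum_add_distrib]

theorem prd_zsmul_left (p q : ℕ) (n : ℤ) (F G : (ℕ → A) → A) :
    prd p q (n • F) G = n • prd p q F G := by
  simp only [prd, circ_zsmul_left, Finset.smul_sum]
  exact Finset.sum_congr rfl fun i _ => smul_comm _ _ _

theorem prd_add_right (p q : ℕ) (F G H : (ℕ → A) → A) (hF : Addi p F) :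
    prd p q F (G + H) = prd p q F G + prd p q F H := by
  simp only [prd]
  rw [← Finset.sum_add_distrib]
  refine Finset.sum_congr rfl fun i hi => ?_
  rw [circ_add_right p q i (by simpa [Nat.lt_succ_iff] using hi) _ _ _ hF, smul_add]

theorem prd_zsmul_right (p q : ℕ) (n : ℤ) (F G : (ℕ → A) → A) (hF : Addi p F) :
    prd p q F (n • G) = n • prd p q F G := by
  simp only [prd]
  rw [Finset.smul_sum]
  refine Finset.sum_congr rfl fun i hi => ?_
  rw [circ_zsmul_right p q i (by simpa [Nat.lt_succ_iff] using hi) _ _ _ hF, smul_comm]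

theorem circ_seq (q r i j : ℕ) (hj : j ≤ q) (F G H : (ℕ → A) → A) :
    circ r (i + j) (circ q i F G) H = circ (q + r) i F (circ r j G H) := by
  funext u
  unfold circ
  congr 1
  funext m
  rcases lt_trichotomy m i with h | h | h
  · simp [h, show m < i + j by omega]
  · subst h
    simp only [lt_irrefl, if_false, if_true]
    congr 1
    funext l
    rcases lt_trichotomy l j with h | h | h
    · simp [h]
    · subst h; simp [add_assoc]
    · simp [show ¬ l < j by omega, show ¬ l = j by omega, add_assoc]
  · simp [show ¬ m < i by omega, show ¬ m = i by omega, show ¬ m + q < i + j by omega,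
      show ¬ m + q = i + j by omega, add_assoc]

theorem circ_par (q r i j : ℕ) (hij : i < j) (F G H : (ℕ → A) → A) (hG : Loc q G) :
    circ r (j + q) (circ q i F G) H = circ q i (circ r j F H) G := by
  funext u
  unfold circ
  congr 1
  funext m
  rcases lt_trichotomy m i with h | h | h
  · simp [h, show m < j + q by omega, show m < j by omega]
  · subst h
    simp only [lt_irrefl, if_false, if_true, hij]
    apply hG
    intro l hl
    simp [show m + l < j + q by omega]
  · rcases lt_trichotomy m j with h' | h' | h'
    · simp [h', show ¬ m < i by omega, show ¬ m = i by omega]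
    · subst h'
      simp only [lt_irrefl, if_false, if_true, show ¬ m < i by omega, show ¬ m = i by omega]
      congr 1
      funext l
      simp [show ¬ m + l < i by omega, show ¬ m + l = i by omega, add_right_comm]
    · simp [show ¬ m < i by omega, show ¬ m = i by omega, show ¬ m < j by omega,
        show ¬ m = j by omega, show ¬ m + r < i by omega, show ¬ m + r = i by omega,
        add_right_comm]

/-- The half of the associator. -/
def S (p q r : ℕ) (F G H : (ℕ → A) → A) : (ℕ → A) → A :=
  ∑ j ∈ Finset.range (p + 1), ∑ i ∈ Finset.range j,
    ((-1 : ℤ) ^ (i * q + j * r)) • circ r (j + q) (circ q i F G) H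

theorem sum_split {M : Type*} [AddCommMonoid M] (p q : ℕ) (T : ℕ → ℕ → M) :
    ∑ i ∈ Finset.range (p + 1), ∑ k ∈ Finset.range (p + q + 1), T i k =
      (∑ i ∈ Finset.range (p + 1), ∑ k ∈ Finset.range i, T i k)
      + (∑ i ∈ Finset.range (p + 1), ∑ j ∈ Finset.range (q + 1), T i (i + j))
      + ∑ j ∈ Finset.range (p + 1), ∑ i ∈ Finset.range j, T i (j + q) := by
  have h3 : ∑ j ∈ Finset.range (p + 1), ∑ i ∈ Finset.range j, T i (j + q) =
      ∑ i ∈ Finset.range (p + 1), ∑ j ∈ Finset.Ico (i + 1) (p + 1), T i (j + q) := by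
    apply Finset.sum_comm'
    intro x y
    simp only [Finset.mem_range, Finset.mem_Ico]
    omega
  rw [h3, ← Finset.sum_add_distrib, ← Finset.sum_add_distrib]
  refine Finset.sum_congr rfl fun i hi => ?_
  obtain ⟨e, rfl⟩ : ∃ e, p = i + e := ⟨p - i, by simp at hi; omega⟩
  rw [show i + e + q + 1 = i + (q + 1) + e by ring, Finset.sum_range_add, Finset.sum_range_add,
    Finset.sum_Ico_eq_sum_range, show i + e + 1 - (i + 1) = e by omega]
  congr 1
  refine Finset.sum_congr rfl fun x _ => ?_
  congr 1
  ring

theorem assoc (p q r : ℕ) (F G H : (ℕ → A) → A) (hF : Addi p F) (hH : Loc r H) :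
    prd (p + q) r (prd p q F G) H = prd p (q + r) F (prd q r G H)
      + ((-1 : ℤ) ^ (q * r)) • S p q r F G H + S p r q F H G := by
  have h1 : prd (p + q) r (prd p q F G) H =
      ∑ i ∈ Finset.range (p + 1), ∑ k ∈ Finset.range (p + q + 1),
        ((-1 : ℤ) ^ (i * q + k * r)) • circ r k (circ q i F G) H := by
    rw [Finset.sum_comm]
    simp only [prd, circ_sum_left, circ_zsmul_left, Finset.smul_sum, smul_smul, ← pow_add]
    refine Finset.sum_congr rfl fun i _ => Finset.sum_congr rfl fun k _ => ?_
    rw [add_comm]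
  have h2 : prd p (q + r) F (prd q r G H) =
      ∑ i ∈ Finset.range (p + 1), ∑ j ∈ Finset.range (q + 1),
        ((-1 : ℤ) ^ (i * q + (i + j) * r)) • circ r (i + j) (circ q i F G) H := by
    rw [prd]
    refine Finset.sum_congr rfl fun i hi => ?_
    have hi' : i ≤ p := by simpa [Nat.lt_succ_iff] using hi
    rw [prd, circ_sum_right p _ i hi' _ _ _ hF, Finset.smul_sum]
    refine Finset.sum_congr rfl fun j hj => ?_
    rw [circ_zsmul_right p _ i hi' _ _ _ hF, circ_seq q r i j (by simpa [Nat.lt_succ_iff] using hj),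
      smul_smul, ← pow_add]
    congr 2
    ring
  have h3 : S p r q F H G = ∑ i ∈ Finset.range (p + 1), ∑ k ∈ Finset.range i,
        ((-1 : ℤ) ^ (i * q + k * r)) • circ r k (circ q i F G) H := by
    rw [S]
    refine Finset.sum_congr rfl fun i _ => Finset.sum_congr rfl fun k hk => ?_
    rw [circ_par r q k i (by simpa using hk) _ _ _ hH, add_comm]
  have h4 : ((-1 : ℤ) ^ (q * r)) • S p q r F G H =
      ∑ j ∈ Finset.range (p + 1), ∑ i ∈ Finset.range j,
        ((-1 : ℤ) ^ (i * q + (j + q) * r)) • circ r (j + q) (circ q i F G) H := by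
    simp only [S, Finset.smul_sum, smul_smul, ← pow_add]
    refine Finset.sum_congr rfl fun i _ => Finset.sum_congr rfl fun k hk => ?_
    congr 2
    ring
  rw [h1, h2, h3, h4, sum_split]
  abel

theorem jacobi (n p q : ℕ) (M F G : (ℕ → A) → A) (hM : Addi n M) (hF : Addi p F) (hG : Addi q G)
    (lM : Loc n M) (lF : Loc p F) (lG : Loc q G) :
    brk n (p + q) M (brk p q F G) = brk (n + p) q (brk n p M F) G
      + ((-1 : ℤ) ^ (n * p)) • brk p (n + q) F (brk n q M G) := by
  simp only [brk, sub_eq_add_neg, ← neg_smul, prd_add_left, prd_zsmul_left,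
    prd_add_right _ _ _ _ _ hM, prd_add_right _ _ _ _ _ hF, prd_add_right _ _ _ _ _ hG,
    prd_zsmul_right _ _ _ _ _ hM, prd_zsmul_right _ _ _ _ _ hF, prd_zsmul_right _ _ _ _ _ hG]
  have a1 := assoc n p q M F G hM lG
  have a2 := assoc n q p M G F hM lF
  have a3 := assoc p n q F M G hF lG
  have a4 := assoc p q n F G M hF lM
  have a5 := assoc q n p G M F hG lF
  have a6 := assoc q p n G F M hG lM
  rw [add_comm q p] at a2
  rw [add_comm p n] at a3
  rw [add_comm q n] at a4 a5
  rw [add_comm p n] at a6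
  rw [add_comm q p] at a6
  rw [a1, a2, a3, a4, a5, a6]
  simp only [mul_add, add_mul, pow_add, mul_comm p n, mul_comm q n, mul_comm q p]
  rcases neg_one_pow_eq_or ℤ (n * p) with h1 | h1 <;>
  rcases neg_one_pow_eq_or ℤ (n * q) with h2 | h2 <;>
  rcases neg_one_pow_eq_or ℤ (p * q) with h3 | h3 <;>
  simp only [h1, h2, h3] <;> module

/-- Extension of a finite cochain to sequences. -/
def ext {n : ℕ} (F : (Fin n → A) → A) : (ℕ → A) → A := fun u => F (fun i => u i)

theorem ext_inj {n : ℕ} {F G : (Fin n → A) → A} (h : ext F = ext G) : F = G := by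
  funext u
  have := congrFun h (fun i => if hi : i < n then u ⟨i, hi⟩ else 0)
  simpa [ext] using this

theorem ext_recast {n m : ℕ} (h : n = m) (F : (Fin n → A) → A) : ext (recast h F) = ext F := rfl

theorem ext_add {n : ℕ} (F G : (Fin n → A) → A) : ext (F + G) = ext F + ext G := rfl

theorem ext_smul {n : ℕ} (z : ℤ) (F : (Fin n → A) → A) : ext (z • F) = z • ext F := rfl

theorem ext_gprod (p q : ℕ) (F : (Fin (p + 1) → A) → A) (G : (Fin (q + 1) → A) → A) :
    ext (gprod p q F G) = prd p q (ext F) (ext G) := by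
  funext u
  simp only [ext, gprod, prd, Finset.sum_apply, Pi.smul_apply]
  rw [← Fin.sum_univ_eq_sum_range (fun i => ((-1 : ℤ) ^ (i * q)) •
    circ q i (ext F) (ext G) u)]
  rfl

theorem ext_gbr (p q : ℕ) (F : (Fin (p + 1) → A) → A) (G : (Fin (q + 1) → A) → A) :
    ext (gbr p q F G) = brk p q (ext F) (ext G) := by
  rw [brk, ← ext_gprod, ← ext_gprod]
  rfl

/-- The multiplication. -/
def mu : (ℕ → A) → A := fun u => u 0 * u 1

theorem mu_loc : Loc 1 (mu : (ℕ → A) → A) := by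
  intro u v h
  simp [mu, h 0, h 1]

theorem mu_addi : Addi 1 (mu : (ℕ → A) → A) := by
  intro u i x y hi
  interval_cases i <;> simp [mu, add_mul, mul_add]

theorem ext_loc (q : ℕ) (F : (Fin (q + 1) → A) → A) : Loc q (ext F) := by
  intro u v h
  unfold ext
  congr 1
  funext i
  exact h i (by omega)

theorem ext_addi {k : Type*} [Field k] [Algebra k A] (p : ℕ)
    (f : MultilinearMap k (fun _ : Fin (p + 1) => A) A) : Addi p (ext f) := by
  intro u i x y hi
  have key : ∀ z, (fun j : Fin (p + 1) => Function.update u i z j) =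
      Function.update (fun j : Fin (p + 1) => u j) ⟨i, by omega⟩ z := by
    intro z
    funext j
    by_cases h : (j : ℕ) = i
    · subst h; simp
    · have : j ≠ ⟨i, by omega⟩ := fun h' => h (by rw [h'])
      simp [h, this]
  simp only [ext, key]
  exact f.map_update_add _ _ _ _

theorem ext_dH (p : ℕ) (F : (Fin (p + 1) → A) → A) :
    ext (dH (p + 1) F) = brk 1 p mu (ext F) := by
  funext u
  have hs : ∀ s ∈ Finset.range (p + 1), ((-1 : ℤ) ^ (s + 1)) •
          F (fun i => if (i : ℕ) < s then u i.castSucc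
              else if (i : ℕ) = s then u i.castSucc * u i.succ
              else u i.succ) = - (((-1 : ℤ) ^ (s * 1)) • circ 1 s (ext F) mu u) := by
    intro s _
    rw [mul_one, pow_succ, mul_neg_one, neg_smul]
    congr 2
    unfold circ ext mu
    congr 1
    funext i
    by_cases h : (i : ℕ) = s
    · simp [h]
    · simp [h]
  have h0 : ext (dH (p + 1) F) u = ((-1 : ℤ) ^ (p + 1 + 1)) •
    (u 0 * F (fun i => u i.succ)
      + ∑ s ∈ Finset.range (p + 1), ((-1 : ℤ) ^ (s + 1)) •
          F (fun i => if (i : ℕ) < s then u i.castSucc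
              else if (i : ℕ) = s then u i.castSucc * u i.succ
              else u i.succ)
      + ((-1 : ℤ) ^ (p + 1 + 1)) • (F (fun i => u i.castSucc) * u (Fin.last (p + 1)))) := by
    simp only [ext, dH, hochschild, Pi.smul_apply]
    rfl
  have h1 : circ p 0 mu (ext F) u = F (fun i => u i.castSucc) * u (Fin.last (p + 1)) := by
    simp [circ, mu, ext, add_comm]
  have h2 : circ p 1 mu (ext F) u = u 0 * F (fun i => u i.succ) := by
    simp [circ, mu, ext, add_comm]
  rw [h0, Finset.sum_congr rfl hs, Finset.sum_neg_distrib, ← h1, ← h2]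
  simp only [brk, prd, Pi.sub_apply, Pi.smul_apply, Finset.sum_apply]
  rw [Finset.sum_range_succ (n := 1), Finset.sum_range_one]
  simp only [one_mul, zero_mul, pow_zero, pow_succ]
  rcases neg_one_pow_eq_or ℤ p with h | h <;> simp only [h] <;> module

end GLeib

/-- Graded Leibniz rule: for `f ∈ C^{p+1}(A,A)` and `g ∈ C^{q+1}(A,A)`,
`d_H [f,g]_G = [d_H f, g]_G + (−1)^p [f, d_H g]_G`. -/
theorem dH_gerstenhaber_leibniz (k : Type*) [Field k] (A : Type*) [Ring A] [Algebra k A]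
    (p q : ℕ)
    (f : MultilinearMap k (fun _ : Fin (p + 1) => A) A)
    (g : MultilinearMap k (fun _ : Fin (q + 1) => A) A) :
    dH (p + q + 1) (gbr p q ⇑f ⇑g)
      = recast (by omega) (gbr (p + 1) q (dH (p + 1) ⇑f) ⇑g)
        + ((-1 : ℤ) ^ p) • recast (by omega) (gbr p (q + 1) ⇑f (dH (q + 1) ⇑g)) := by
  apply GLeib.ext_inj
  have e1 := GLeib.ext_dH (p + q) (gbr p q ⇑f ⇑g)
  rw [GLeib.ext_add, GLeib.ext_smul, GLeib.ext_recast, GLeib.ext_recast, GLeib.ext_gbr,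
    GLeib.ext_gbr, e1, GLeib.ext_dH, GLeib.ext_dH, GLeib.ext_gbr,
    GLeib.jacobi 1 p q _ _ _ GLeib.mu_addi (GLeib.ext_addi p f) (GLeib.ext_addi q g)
      GLeib.mu_loc (GLeib.ext_loc p _) (GLeib.ext_loc q _), one_mul, add_comm 1 p, add_comm 1 q]
end
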